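/- Fix ℏ > 0 and an integer n ≥ 2. Fix γ_n = (γ_{n1},…,γ_{nn}) ∈ ℂ^n and real numbers η_{mj}, 1 ≤ j ≤ m ≤ n−1, with min_{1≤j≤m} η_{mj} > max_{1≤k≤m+1} η_{m+1,k} for every 1 ≤ m ≤ n−1, where η_{nk} := Im γ_{nk}. For 1 ≤ p ≤ n and a top row β = (β_1,…,β_p) ∈ ℂ^p with Im β_k = η_{pk}, let ψ_β(x_1,…,x_p) denote the Mellin–Barnes integral over ξ ∈ ℝ^{p(p−1)/2}: ψ_β(x) = ∫ ∏_{m=1}^{p−1}[∏_{k=1}^{m}∏_{l=1}^{m+1} ℏ^{(γ_{mk} − γ_{m+1,l})/(iℏ)}·Γ((γ_{mk} − γ_{m+1,l})/(iℏ)) / ∏_{s≠t, s,t≤m} Γ((γ_{ms} − γ_{mt})/(iℏ))]·exp((i/ℏ)·Σ_{m=1}^{p}(Σ_j γ_{mj} − Σ_j γ_{m−1,j})·x_m) dξ, where γ_{mj} = ξ_{mj} + iη_{mj} for m ≤ p−1 and the top row γ_p = β. Then the recursive relation holds: ψ_{γ_n}(x_1,…,x_n) = ∫_{ℝ^{n−1}}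 μ^{(n−1)}(γ_{n−1})·f_n(γ_n,γ_{n−1})·exp((i/ℏ)·(Σ_{j=1}^{n} γ_{nj} − Σ_{k=1}^{n−1} γ_{n−1,k})·x_n)·ψ_{γ_{n−1}}(x_1,…,x_{n−1}) dξ_{n−1,1}⋯dξ_{n−1,n−1}, where γ_{n−1,k} = ξ_{n−1,k} + iη_{n−1,k}, μ^{(n−1)}(γ_{n−1}) = ∏_{s≠t, s,t≤n−1} Γ((γ_{n−1,s} − γ_{n−1,t})/(iℏ))^{−1}, and f_n(γ_n,γ_{n−1}) = ∏_{k=1}^{n−1}∏_{m=1}^{n} ℏ^{(γ_{n−1,k} − γ_{nm})/(iℏ)}·Γ((γ_{n−1,k} − γ_{nm})/(iℏ)). -/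

import Mathlib

open Finset MeasureTheory

noncomputable section

/-- A Gelfand–Zetlin array: complex values `γ n j`, relevant for `1 ≤ j ≤ n ≤ N`. -/
abbrev GZ := ℕ → ℕ → ℂ

/-- Index set of the Gelfand–Zetlin variables `(n, j)` with `1 ≤ j ≤ n ≤ N − 1`
(the pair `(p.1, p.2)` encodes `(n, j)`). -/
abbrev GZIdx (N : ℕ) := {p : Fin N × Fin N // 1 ≤ (p.2 : ℕ) ∧ (p.2 : ℕ) ≤ (p.1 : ℕ)}

/-- The Gelfand–Zetlin array on the tube: lower levels `γ_{nj} = ξ_{nj} + iη_{nj}`,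
top row `g`. -/
def gzTube (N : ℕ) (g : ℕ → ℂ) (η : ℕ → ℕ → ℝ) (ξ : GZIdx N → ℝ) : GZ := fun n j =>
  if h : 1 ≤ j ∧ j ≤ n ∧ n < N then
    ((ξ ⟨(⟨n, h.2.2⟩, ⟨j, lt_of_le_of_lt h.2.1 h.2.2⟩), h.1, h.2.1⟩ : ℝ) : ℂ) +
      Complex.I * (η n j : ℂ)
  else g j

/-- `ℏ^z := exp(z log ℏ)`. -/
def hpow (ℏ : ℝ) (z : ℂ) : ℂ := Complex.exp (z * (Real.log ℏ : ℂ))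

/-- The integrand of the Mellin–Barnes representation of the `GL(N,ℝ)` open Toda
chain wave function (`x n` is the Toda variable `x_n`, `1 ≤ n ≤ N`). -/
def todaIntegrand (ℏ : ℝ) (N : ℕ) (x : ℕ → ℝ) (γ : GZ) : ℂ :=
  (∏ n ∈ Icc 1 (N - 1),
    (∏ k ∈ Icc 1 n, ∏ m ∈ Icc 1 (n + 1),
      hpow ℏ ((γ n k - γ (n + 1) m) / (Complex.I * ℏ)) *
        Complex.Gamma ((γ n k - γ (n + 1) m) / (Complex.I * ℏ))) /
      ∏ s ∈ Icc 1 n, ∏ p ∈ (Icc 1 n).erase s,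
        Complex.Gamma ((γ n s - γ n p) / (Complex.I * ℏ))) *
    Complex.exp ((Complex.I / (ℏ : ℂ)) * ∑ n ∈ Icc 1 N,
      ((∑ j ∈ Icc 1 n, γ n j) - ∑ j ∈ Icc 1 (n - 1), γ (n - 1) j) * (x n : ℂ))

/-- The level-`p` Mellin–Barnes wave function with top row `β`
(Im β_k = η_{pk} being implicit in the choice of `β`). -/
def psiMB (ℏ : ℝ) (η : ℕ → ℕ → ℝ) (p : ℕ) (β : ℕ → ℂ) (x : ℕ → ℝ) : ℂ :=
  ∫ ξ : GZIdx p → ℝ, todaIntegrand ℏ p x (gzTube p β η ξ)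


lemma aux_gamma_mono {a a' : ℝ} (ha : 0 < a) (haa : a ≤ a') (b : ℝ) :
    ‖Complex.Gamma (a + b * Complex.I)‖ * Real.Gamma a' ≤
      ‖Complex.Gamma (a' + b * Complex.I)‖ * Real.Gamma a := by
  have ha' : 0 < a' := ha.trans_le haa
  have t1 := (Complex.GammaSeq_tendsto_Gamma (a + b * Complex.I)).norm.mul
    (Complex.GammaSeq_tendsto_Gamma (a' : ℂ)).norm
  have t2 := (Complex.GammaSeq_tendsto_Gamma (a' + b * Complex.I)).norm.mul
    (Complex.GammaSeq_tendsto_Gamma (a : ℂ)).norm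
  rw [Complex.Gamma_ofReal, Complex.norm_real,
    Real.norm_of_nonneg (Real.Gamma_pos_of_pos (by assumption)).le] at t1 t2
  refine le_of_tendsto_of_tendsto t1 t2 ?_
  filter_upwards [Filter.eventually_gt_atTop 0] with n hn
  have hn' : (0:ℝ) < n := by exact_mod_cast hn
  have hG : ∀ z : ℂ, ‖Complex.GammaSeq z n‖ = (n:ℝ) ^ z.re * n.factorial /
      ∏ j ∈ Finset.range (n + 1), ‖z + j‖ := by
    intro z
    rw [Complex.GammaSeq, norm_div, norm_mul, norm_prod]
    congr 2
    · exact_mod_cast Complex.norm_natCast_cpow_of_pos hn z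
    · simp
  rw [hG, hG, hG, hG, div_mul_div_comm, div_mul_div_comm, ← Finset.prod_mul_distrib,
    ← Finset.prod_mul_distrib]
  have hpos : ∀ (c d : ℝ), 0 < c → ∀ j : ℕ, 0 < ‖(c:ℂ) + d * Complex.I + j‖ := by
    intro c d hc j
    rw [norm_pos_iff]
    intro h
    have := congrArg Complex.re h
    simp at this
    have : (0:ℝ) ≤ j := Nat.cast_nonneg j
    linarith
  have hpos' : ∀ (c : ℝ), 0 < c → ∀ j : ℕ, ‖(c:ℂ) + j‖ = c + j := by
    intro c hc j
    have : (c:ℂ) + j = ((c + j : ℝ) : ℂ) := by push_cast; rfl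
    rw [this, Complex.norm_real, Real.norm_of_nonneg (by positivity)]
  have hsq : ∀ (c d : ℝ) (j : ℕ), ‖(c:ℂ) + d * Complex.I + j‖ = √((c + j)^2 + d^2) := by
    intro c d j
    rw [← Complex.norm_add_mul_I]; congr 1; push_cast; ring
  have hnum : (n:ℝ) ^ ((a:ℂ) + b * Complex.I).re * n.factorial * ((n:ℝ) ^ ((a':ℂ)).re * n.factorial)
      = (n:ℝ) ^ ((a':ℂ) + b * Complex.I).re * n.factorial * ((n:ℝ) ^ ((a:ℂ)).re * n.factorial) := by
    simp; ring
  rw [hnum]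
  apply div_le_div_of_nonneg_left
  · positivity
  · apply Finset.prod_pos; intro j _
    rw [hpos' a ha]
    have := hpos a' b ha' j
    positivity
  · apply Finset.prod_le_prod
    · intro j _; positivity
    · intro j _
      rw [hpos' a ha, hpos' a' ha', hsq, hsq]
      have h1 : (0:ℝ) < a + j := by positivity
      have h2 : a + j ≤ a' + j := by linarith
      apply le_of_sq_le_sq _ (by positivity)
      rw [mul_pow, mul_pow, Real.sq_sqrt (by positivity), Real.sq_sqrt (by positivity)]
      have : (a + j)^2 ≤ (a' + j)^2 := by gcongr
      nlinarith [mul_le_mul_of_nonneg_right this (sq_nonneg b)]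

lemma aux_gamma_half (b : ℝ) :
    ‖Complex.Gamma ((1/2 : ℝ) + b * Complex.I)‖ ≤ √(2 * Real.pi) * Real.exp (-(Real.pi / 2) * |b|) := by
  have h := Complex.Gamma_mul_Gamma_one_sub ((1/2 : ℝ) + b * Complex.I)
  have h1 : (1 : ℂ) - ((1/2 : ℝ) + b * Complex.I) = (starRingEnd ℂ) ((1/2 : ℝ) + b * Complex.I) := by
    rw [map_add, map_mul, Complex.conj_ofReal, Complex.conj_ofReal, Complex.conj_I]; push_cast; ring
  rw [h1, Complex.Gamma_conj] at h
  have h2 : Complex.sin (Real.pi * ((1/2 : ℝ) + b * Complex.I)) = (Real.cosh (Real.pi * b) : ℝ) := by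
    rw [show (Real.pi * ((1/2 : ℝ) + b * Complex.I) : ℂ) = (Real.pi * b : ℂ) * Complex.I + Real.pi / 2 by
      push_cast; ring, Complex.sin_add_pi_div_two, Complex.cos_mul_I]
    push_cast; rfl
  rw [h2] at h
  have h3 := congrArg norm h
  rw [norm_mul, Complex.norm_conj, norm_div, Complex.norm_real, Complex.norm_real,
    Real.norm_of_nonneg Real.pi_pos.le, Real.norm_of_nonneg (Real.cosh_pos _).le] at h3
  apply le_of_sq_le_sq _ (by positivity)
  rw [sq, h3, mul_pow, Real.sq_sqrt (by positivity), ← Real.exp_nat_mul,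
    div_le_iff₀ (Real.cosh_pos _)]
  have h4 : Real.exp (Real.pi * |b|) ≤ 2 * Real.cosh (Real.pi * b) := by
    rw [← Real.cosh_abs, abs_mul, abs_of_pos Real.pi_pos, Real.cosh_eq]
    have := Real.exp_pos (-(Real.pi * |b|))
    linarith
  have h5 : Real.exp ((2:ℕ) * (-(Real.pi / 2) * |b|)) * Real.exp (Real.pi * |b|) = 1 := by
    rw [← Real.exp_add]; simp; ring
  have h6 := Real.exp_pos ((2:ℕ) * (-(Real.pi / 2) * |b|))
  have h7 := mul_le_mul_of_nonneg_left h4 h6.le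
  rw [h5] at h7
  nlinarith [Real.pi_pos, mul_le_mul_of_nonneg_left h7 Real.pi_pos.le]

lemma aux_lin_exp (c : ℝ) (hc : 0 ≤ c) {δ : ℝ} (hδ : 0 < δ) (b : ℝ) :
    c + |b| ≤ (c + 1 / δ) * Real.exp (δ * |b|) := by
  have h1 := Real.add_one_le_exp (δ * |b|)
  have h2 : 1 ≤ Real.exp (δ * |b|) := Real.one_le_exp (by positivity)
  have h3 : |b| ≤ 1 / δ * Real.exp (δ * |b|) := by
    rw [div_mul_eq_mul_div, le_div_iff₀ hδ]; linarith
  nlinarith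

lemma aux_gamma_bound {a : ℝ} (ha : 0 < a) {δ : ℝ} (hδ : 0 < δ) :
    ∃ C, 0 ≤ C ∧ ∀ b : ℝ, ‖Complex.Gamma (a + b * Complex.I)‖ ≤
      C * Real.exp (-(Real.pi / 2 - δ) * |b|) := by
  have key : ∀ n : ℕ, ∀ δ : ℝ, 0 < δ → ∃ C, 0 ≤ C ∧ ∀ b : ℝ,
      ‖Complex.Gamma (((1/2 + n : ℝ) : ℂ) + b * Complex.I)‖ ≤
      C * Real.exp (-(Real.pi / 2 - δ) * |b|) := by
    intro n
    induction n with
    | zero =>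
      intro δ hδ
      refine ⟨√(2 * Real.pi), by positivity, fun b => ?_⟩
      have := aux_gamma_half b
      simp only [Nat.cast_zero, add_zero]
      refine this.trans ?_
      gcongr
      linarith
    | succ n ih =>
      intro δ hδ
      obtain ⟨C, hC, h⟩ := ih (δ/2) (by positivity)
      refine ⟨(1/2 + n + 1 / (δ/2)) * C, by positivity, fun b => ?_⟩
      have hz : (((1/2 + n : ℝ) : ℂ) + b * Complex.I) ≠ 0 := by
        intro h
        have := congrArg Complex.re h
        simp at this
        have : (0:ℝ) ≤ n := Nat.cast_nonneg n
        linarith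
      have e : (((1/2 + (n + 1 : ℕ) : ℝ) : ℂ) + b * Complex.I) =
          (((1/2 + n : ℝ) : ℂ) + b * Complex.I) + 1 := by push_cast; ring
      rw [e, Complex.Gamma_add_one _ hz, norm_mul]
      have n1 : ‖(((1/2 + n : ℝ) : ℂ) + b * Complex.I)‖ ≤
          (1/2 + n + 1 / (δ/2)) * Real.exp (δ/2 * |b|) := by
        refine le_trans ?_ (aux_lin_exp (1/2 + n) (by positivity) (half_pos hδ) b)
        refine (norm_add_le _ _).trans ?_
        rw [Complex.norm_real, Real.norm_of_nonneg (by positivity)]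
        simp
      calc _ ≤ _ := mul_le_mul n1 (h b) (norm_nonneg _) (by positivity)
        _ = (1/2 + n + 1 / (δ/2)) * C * (Real.exp (δ/2 * |b|) *
            Real.exp (-(Real.pi / 2 - δ/2) * |b|)) := by ring
        _ = _ := by rw [← Real.exp_add]; congr 2; ring
  obtain ⟨n, hn⟩ := exists_nat_ge a
  obtain ⟨C, hC, h⟩ := key n δ hδ
  have hp : (0:ℝ) < 1/2 + n := by positivity
  have hg := Real.Gamma_pos_of_pos hp
  have hga := Real.Gamma_pos_of_pos ha
  refine ⟨C * Real.Gamma a / Real.Gamma (1/2 + n), by positivity, fun b => ?_⟩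
  have := aux_gamma_mono ha (show a ≤ 1/2 + n by linarith) b
  rw [← le_div_iff₀ hg] at this
  refine this.trans ?_
  rw [div_mul_eq_mul_div]
  refine div_le_div_of_nonneg_right ?_ hg.le
  nlinarith [mul_le_mul_of_nonneg_right (h b) hga.le]

lemma aux_inv_gamma_pair (c : ℝ) {δ : ℝ} (hδ : 0 < δ) :
    ∃ C, 0 ≤ C ∧ ∀ b : ℝ, ‖(Complex.Gamma (c + b * Complex.I))⁻¹ *
        (Complex.Gamma (-(c + b * Complex.I)))⁻¹‖ ≤
      C * Real.exp ((Real.pi + δ) * |b|) := by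
  refine ⟨(|c| + 1 / δ) / Real.pi, by positivity, fun b => ?_⟩
  set z : ℂ := c + b * Complex.I with hz
  by_cases h0 : z = 0
  · rw [h0]; simp [Complex.Gamma_zero]; positivity
  have h := Complex.Gamma_mul_Gamma_one_sub z
  rw [show 1 - z = -z + 1 by ring, Complex.Gamma_add_one _ (neg_ne_zero.mpr h0)] at h
  have e : (Complex.Gamma z)⁻¹ * (Complex.Gamma (-z))⁻¹ = - z * Complex.sin (Real.pi * z) / Real.pi := by
    rw [mul_left_comm] at h
    have h' := congrArg (fun w => (w)⁻¹) h
    simp only [mul_inv, inv_div] at h'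
    rw [mul_div_assoc, ← h', ← mul_assoc, mul_inv_cancel₀ (neg_ne_zero.mpr h0), one_mul]
  rw [e, norm_div, norm_mul, norm_neg, Complex.norm_real, Real.norm_of_nonneg Real.pi_pos.le]
  have n1 : ‖z‖ ≤ (|c| + 1 / δ) * Real.exp (δ * |b|) := by
    refine le_trans ?_ (aux_lin_exp |c| (by positivity) hδ b)
    refine (norm_add_le _ _).trans ?_
    simp
  have n2 : ‖Complex.sin (Real.pi * z)‖ ≤ Real.exp (Real.pi * |b|) := by
    rw [Complex.sin, norm_div, norm_mul, Complex.norm_I, mul_one]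
    have e1 : ‖Complex.exp (-(Real.pi * z) * Complex.I)‖ ≤ Real.exp (Real.pi * |b|) := by
      rw [Complex.norm_exp]
      apply Real.exp_le_exp.mpr
      simp [hz]
      nlinarith [Real.pi_pos, le_abs_self b]
    have e2 : ‖Complex.exp ((Real.pi * z) * Complex.I)‖ ≤ Real.exp (Real.pi * |b|) := by
      rw [Complex.norm_exp]
      apply Real.exp_le_exp.mpr
      simp [hz]
      nlinarith [Real.pi_pos, neg_abs_le b]
    have e3 := norm_sub_le (Complex.exp (-(Real.pi * z) * Complex.I)) (Complex.exp ((Real.pi * z) * Complex.I))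
    rw [Complex.norm_ofNat, div_le_iff₀ two_pos]
    linarith
  rw [div_mul_eq_mul_div]
  refine div_le_div_of_nonneg_right ?_ Real.pi_pos.le
  calc _ ≤ _ := mul_le_mul n1 n2 (norm_nonneg _) (by positivity)
    _ = _ := by rw [mul_assoc, ← Real.exp_add, ← add_mul, add_comm δ]

/-- step function -/
noncomputable def stepU (a t : ℝ) : ℝ := if a ≤ t then 1 else 0

lemma stepU_eq (a b : ℝ) : (fun t => (stepU a t - stepU b t)^2) =
    (Set.Ico (min a b) (max a b)).indicator (fun _ => (1:ℝ)) := by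
  funext t
  unfold stepU Set.indicator
  simp only [Set.mem_Ico, min_le_iff, lt_max_iff]
  split_ifs <;> grind

lemma stepU_integrable (a b : ℝ) : Integrable (fun t => (stepU a t - stepU b t)^2) := by
  rw [stepU_eq, integrable_indicator_iff measurableSet_Ico]
  simp

lemma stepU_integral (a b : ℝ) : ∫ t, (stepU a t - stepU b t)^2 = |a - b| := by
  rw [stepU_eq, integral_indicator measurableSet_Ico]
  simp
  rw [max_sub_min_eq_abs']

lemma aux_step_int {ι κ : Type*} (s : Finset ι) (t : Finset κ) (f : ι → ℝ) (g : κ → ℝ) :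
    Integrable (fun x => ∑ i ∈ s, ∑ j ∈ t, (stepU (f i) x - stepU (g j) x)^2) :=
  integrable_finsetSum _ (fun _ _ => integrable_finsetSum _ (fun _ _ => stepU_integrable _ _))

lemma aux_step_sum {ι κ : Type*} (s : Finset ι) (t : Finset κ) (f : ι → ℝ) (g : κ → ℝ) :
    ∑ i ∈ s, ∑ j ∈ t, ∫ x, (stepU (f i) x - stepU (g j) x)^2 =
      ∫ x, ∑ i ∈ s, ∑ j ∈ t, (stepU (f i) x - stepU (g j) x)^2 := by
  rw [integral_finsetSum]
  · congr! 1 with i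
    rw [integral_finsetSum]
    intro j _; exact stepU_integrable _ _
  · intro i _
    exact integrable_finsetSum _ (fun j _ => stepU_integrable _ _)

lemma aux_energy {α β : Type*} (A : Finset α) (B : Finset β) (hc : #B = #A + 1) (a : α → ℝ)
    (b : β → ℝ) : ∑ k ∈ A, ∑ s ∈ A, |a k - a s| + ∑ k ∈ B, ∑ s ∈ B, |b k - b s| ≤
      2 * ∑ k ∈ A, ∑ l ∈ B, |a k - b l| := by
  rw [← sub_nonneg]
  simp only [← stepU_integral]
  rw [aux_step_sum, aux_step_sum, aux_step_sum, ← integral_const_mul,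
    ← integral_add (aux_step_int _ _ _ _) (aux_step_int _ _ _ _), sub_nonneg]
  refine integral_mono ((aux_step_int _ _ _ _).add (aux_step_int _ _ _ _))
    ((aux_step_int _ _ _ _).const_mul 2) ?_
  intro t
  simp only
  rw [← sub_nonneg]
  have hu : ∀ x, (stepU x t)^2 = stepU x t := by
    intro x; unfold stepU; split_ifs <;> simp
  obtain ⟨p, hp⟩ : ∃ p : ℤ, (p:ℝ) = ∑ i ∈ A, stepU (a i) t :=
    ⟨∑ i ∈ A, if a i ≤ t then 1 else 0, by push_cast; rfl⟩
  obtain ⟨q, hq⟩ : ∃ q : ℤ, (q:ℝ) = ∑ i ∈ B, stepU (b i) t :=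
    ⟨∑ i ∈ B, if b i ≤ t then 1 else 0, by push_cast; rfl⟩
  simp only [sub_sq, hu, sum_add_distrib, sum_sub_distrib, sum_const, nsmul_eq_mul, ← mul_sum, ← sum_mul,
    mul_assoc, ← hp, ← hq, hc]
  push_cast
  have : (0:ℤ) ≤ (p - q) * (p - q + 1) := by
    rcases le_or_gt 0 (p - q) with h | h
    · positivity
    · exact mul_nonneg_of_nonpos_of_nonpos h.le (by omega)
  have : (0:ℝ) ≤ (p - q) * (p - q + 1) := by exact_mod_cast this
  nlinarith

lemma aux_energy' {α β : Type*} [DecidableEq α] (A : Finset α) (B : Finset β) (hc : #B = #A + 1) (a : α → ℝ)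
    (b : β → ℝ) (R : ℝ) (hb : ∀ l ∈ B, b l ≤ R) (i : α) (hi : i ∈ A) :
    4 * (a i - R) ≤ 2 * ∑ k ∈ A, ∑ l ∈ B, |a k - b l| -
     (∑ k ∈ A, ∑ s ∈ A, |a k - a s| + ∑ k ∈ B, ∑ s ∈ B, |b k - b s|) := by
  have h0 := aux_energy A B hc a b
  rcases le_or_gt (a i) R with h | h
  · linarith
  have h1 := aux_energy A B hc (Function.update a i R) b
  set A' := A.erase i with hA'
  have hcA : (#A : ℝ) = #A' + 1 := by
    rw [← Finset.card_erase_add_one hi]; push_cast; rfl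
  have hdec : ∀ f : α → ℝ, ∑ k ∈ A, f k = f i + ∑ k ∈ A', f k := fun f =>
    (Finset.add_sum_erase A f hi).symm
  have hupd : ∀ k ∈ A', Function.update a i R k = a k := by
    intro k hk; rw [Function.update_of_ne (Finset.ne_of_mem_erase hk)]
  have hself : Function.update a i R i = R := by simp
  have d1 : ∑ k ∈ A, ∑ l ∈ B, |Function.update a i R k - b l| =
      ∑ k ∈ A, ∑ l ∈ B, |a k - b l| - (#A + 1) * (a i - R) := by
    rw [hdec, hdec, hself]
    have : ∑ k ∈ A', ∑ l ∈ B, |Function.update a i R k - b l| = ∑ k ∈ A', ∑ l ∈ B, |a k - b l| :=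
      Finset.sum_congr rfl fun k hk => by rw [hupd k hk]
    rw [this]
    have : ∑ l ∈ B, |R - b l| = ∑ l ∈ B, |a i - b l| - (#A + 1) * (a i - R) := by
      have : ∑ l ∈ B, |R - b l| = ∑ l ∈ B, (|a i - b l| - (a i - R)) := by
        refine Finset.sum_congr rfl fun l hl => ?_
        have := hb l hl
        rw [abs_of_nonneg (by linarith), abs_of_nonneg (by linarith)]; ring
      rw [this, Finset.sum_sub_distrib, Finset.sum_const, nsmul_eq_mul, hc]; push_cast; ring
    rw [this]; ring
  have d2 : ∑ k ∈ A, ∑ s ∈ A, |a k - a s| - 2 * (#A - 1) * (a i - R) ≤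
      ∑ k ∈ A, ∑ s ∈ A, |Function.update a i R k - Function.update a i R s| := by
    have ex : ∀ f : α → ℝ, ∑ k ∈ A, ∑ s ∈ A, |f k - f s| =
        2 * ∑ s ∈ A', |f i - f s| + ∑ k ∈ A', ∑ s ∈ A', |f k - f s| := by
      intro f
      rw [hdec, hdec]
      simp only [hdec, Finset.sum_add_distrib, sub_self, abs_zero]
      have : ∑ k ∈ A', |f k - f i| = ∑ k ∈ A', |f i - f k| :=
        Finset.sum_congr rfl fun k _ => abs_sub_comm _ _
      rw [this]; ring
    rw [ex, ex, hself]
    have s1 : ∑ k ∈ A', ∑ s ∈ A', |Function.update a i R k - Function.update a i R s| =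
        ∑ k ∈ A', ∑ s ∈ A', |a k - a s| :=
      Finset.sum_congr rfl fun k hk => Finset.sum_congr rfl fun s hs => by rw [hupd k hk, hupd s hs]
    have s2 : ∑ s ∈ A', (|a i - a s| - (a i - R)) ≤ ∑ s ∈ A', |R - Function.update a i R s| := by
      refine Finset.sum_le_sum fun s hs => ?_
      rw [hupd s hs]
      have := abs_sub_le (a i) R (a s)
      rw [abs_of_pos (by linarith : 0 < a i - R)] at this
      linarith
    rw [Finset.sum_sub_distrib, Finset.sum_const, nsmul_eq_mul] at s2
    rw [s1, hcA]
    linarith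
  linarith

lemma aux_energy_abs {α β : Type*} [DecidableEq α] (A : Finset α) (B : Finset β) (hc : #B = #A + 1) (a : α → ℝ)
    (b : β → ℝ) (R : ℝ) (hb : ∀ l ∈ B, |b l| ≤ R) (i : α) (hi : i ∈ A) :
    4 * (|a i| - R) ≤ 2 * ∑ k ∈ A, ∑ l ∈ B, |a k - b l| -
     (∑ k ∈ A, ∑ s ∈ A, |a k - a s| + ∑ k ∈ B, ∑ s ∈ B, |b k - b s|) := by
  rcases abs_cases (a i) with ⟨h, _⟩ | ⟨h, _⟩
  · rw [h]
    exact aux_energy' A B hc a b R (fun l hl => (le_abs_self _).trans (hb l hl)) i hi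
  · rw [h]
    have := aux_energy' A B hc (fun k => - a k) (fun k => - b k) R
      (fun l hl => (neg_le_abs _).trans (hb l hl)) i hi
    have e : ∀ x y : ℝ, |-x - -y| = |x - y| := fun x y => by
      rw [← abs_neg]; congr 1; ring
    simpa only [e] using this

/-- row self energy -/
noncomputable def rowS (X : ℕ → ℕ → ℝ) (m : ℕ) : ℝ := ∑ k ∈ Icc 1 m, ∑ s ∈ Icc 1 m, |X m k - X m s|
/-- row interaction energy -/
noncomputable def rowE (X : ℕ → ℕ → ℝ) (m : ℕ) : ℝ := ∑ k ∈ Icc 1 m, ∑ l ∈ Icc 1 (m+1), |X m k - X (m+1) l|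

/-- coercivity -/
lemma aux_coercive (M : ℕ) (X : ℕ → ℕ → ℝ) (R : ℝ) (hX : ∀ k ∈ Icc 1 (M+1), |X (M+1) k| ≤ R) :
    ∃ G : ℝ, 0 ≤ G ∧ (∀ m ≤ M + 1, ∀ k ∈ Icc 1 m, |X m k| ≤ R + G) ∧
      2 * G ≤ ∑ m ∈ Icc 1 M, rowE X m - ∑ m ∈ Icc 1 M, rowS X m := by
  set sl : ℕ → ℝ := fun m => (2 * rowE X m - (rowS X m + rowS X (m+1))) / 4 with hsl
  have hcard : ∀ m, #(Icc 1 (m+1)) = #(Icc 1 m) + 1 := by intro m; simp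
  have hsl0 : ∀ m, 0 ≤ sl m := by
    intro m
    have := aux_energy (Icc 1 m) (Icc 1 (m+1)) (hcard m) (X m) (X (m+1))
    simp only [hsl, rowE, rowS]
    linarith
  have hb : ∀ d ≤ M + 1, ∀ k ∈ Icc 1 (M + 1 - d), |X (M + 1 - d) k| ≤ R + ∑ m ∈ Ico (M + 1 - d) (M+1), sl m := by
    intro d
    induction d with
    | zero => intro _ k hk; simpa using hX k hk
    | succ d ih =>
      intro hd k hk
      have ih := ih (by omega)
      obtain ⟨m, hm⟩ : ∃ m, m = M + 1 - (d+1) := ⟨_, rfl⟩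
      have hm1 : M + 1 - d = m + 1 := by omega
      rw [← hm] at hk ⊢
      rw [hm1] at ih
      have := aux_energy_abs (Icc 1 m) (Icc 1 (m+1)) (hcard m) (X m) (X (m+1)) _ ih k hk
      rw [Finset.sum_eq_sum_Ico_succ_bot (by omega)]
      have hh : |X m k| - (R + ∑ m ∈ Ico (m + 1) (M + 1), sl m) ≤ sl m := by
        simp only [hsl, rowE, rowS] at this ⊢
        linarith
      linarith
  refine ⟨∑ m ∈ Icc 1 M, sl m, Finset.sum_nonneg fun m _ => hsl0 m, ?_, ?_⟩
  · intro m hm k hk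
    have := hb (M + 1 - m) (by omega) k (by rwa [show M + 1 - (M + 1 - m) = m by omega])
    rw [show M + 1 - (M + 1 - m) = m by omega] at this
    refine this.trans (add_le_add le_rfl ?_)
    apply Finset.sum_le_sum_of_subset_of_nonneg
    · intro j hj
      simp only [Finset.mem_Ico, Finset.mem_Icc] at hj hk ⊢
      omega
    · intro j _ _; exact hsl0 j
  · have h0 : ∀ M, ∑ m ∈ Icc 1 M, (rowS X (m+1) - rowS X m) = rowS X (M+1) := by
      intro M
      induction M with
      | zero => simp [rowS]
      | succ M ih => rw [Finset.sum_Icc_succ_top (by omega), ih]; ring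
    have h1 : 0 ≤ rowS X (M+1) := by unfold rowS; positivity
    have h2 := h0 M
    rw [Finset.sum_sub_distrib] at h2
    simp only [hsl]
    rw [← Finset.sum_div, Finset.sum_sub_distrib, Finset.sum_add_distrib, ← Finset.mul_sum]
    linarith

/-- exponential bound -/
def Bd {Ω : Type*} (f : Ω → ℂ) (L : Ω → ℝ) : Prop :=
  ∃ C : ℝ, 0 ≤ C ∧ ∀ ξ, ‖f ξ‖ ≤ C * Real.exp (L ξ)

lemma Bd.mul {Ω : Type*} {f g : Ω → ℂ} {L L' : Ω → ℝ} (hf : Bd f L) (hg : Bd g L') :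
    Bd (fun ξ => f ξ * g ξ) (fun ξ => L ξ + L' ξ) := by
  obtain ⟨C, hC, h⟩ := hf
  obtain ⟨C', hC', h'⟩ := hg
  refine ⟨C * C', by positivity, fun ξ => ?_⟩
  rw [norm_mul, Real.exp_add]
  calc _ ≤ _ := mul_le_mul (h ξ) (h' ξ) (norm_nonneg _) (by positivity)
    _ = _ := by ring

lemma Bd.prod {Ω ι : Type*} (s : Finset ι) {f : ι → Ω → ℂ} {L : ι → Ω → ℝ}
    (hf : ∀ i ∈ s, Bd (f i) (L i)) :
    Bd (fun ξ => ∏ i ∈ s, f i ξ) (fun ξ => ∑ i ∈ s, L i ξ) := by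
  classical
  induction s using Finset.induction_on with
  | empty => exact ⟨1, by simp, fun ξ => by simp⟩
  | insert a s ha ih =>
    have := (hf a (by simp)).mul (ih fun i hi => hf i (by simp [hi]))
    simpa only [Finset.prod_insert ha, Finset.sum_insert ha] using this

lemma Bd.mono {Ω : Type*} {f g : Ω → ℂ} {L L' : Ω → ℝ} (hf : Bd f L) (hfg : ∀ ξ, ‖g ξ‖ = ‖f ξ‖)
    (hL : ∀ ξ, L ξ ≤ L' ξ) : Bd g L' := by
  obtain ⟨C, hC, h⟩ := hf
  refine ⟨C, hC, fun ξ => ?_⟩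
  rw [hfg]
  refine (h ξ).trans ?_
  have := Real.exp_le_exp.mpr (hL ξ)
  gcongr

lemma Bd.sqrt {Ω : Type*} {f : Ω → ℂ} {L L' : Ω → ℝ} (hf : Bd (fun ξ => f ξ * f ξ) L)
    (hL : ∀ ξ, L ξ = 2 * L' ξ) : Bd f L' := by
  obtain ⟨C, hC, h⟩ := hf
  refine ⟨√C, by positivity, fun ξ => ?_⟩
  apply le_of_sq_le_sq _ (by positivity)
  rw [mul_pow, Real.sq_sqrt hC, sq, sq, ← norm_mul, ← Real.exp_add]
  have := h ξ
  rwa [hL, two_mul] at this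

lemma aux_int_exp_abs {c : ℝ} (hc : 0 < c) : Integrable (fun x : ℝ => Real.exp (-c * |x|)) := by
  rw [← integrableOn_univ, ← Set.Iic_union_Ioi (a := (0:ℝ))]
  refine IntegrableOn.union ?_ ?_
  · refine (integrableOn_exp_mul_Iic hc 0).congr_fun ?_ measurableSet_Iic
    intro x hx
    simp only [Set.mem_Iic] at hx
    simp [abs_of_nonpos hx]
  · refine (integrableOn_exp_mul_Ioi (neg_lt_zero.mpr hc) 0).congr_fun ?_ measurableSet_Ioi
    intro x hx
    simp only [Set.mem_Ioi] at hx
    simp [abs_of_pos hx]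

lemma aux_int_exp_sum {ι : Type*} [Fintype ι] {c : ℝ} (hc : 0 < c) :
    Integrable (fun x : ι → ℝ => Real.exp (-c * ∑ i, |x i|)) := by
  have := Integrable.fintype_prod (ι := ι) (f := fun _ (x : ℝ) => Real.exp (-c * |x|))
    (μ := fun _ => volume) (fun _ => aux_int_exp_abs hc)
  simpa only [Finset.mul_sum, Real.exp_sum, volume_pi] using this

lemma gz_im (M : ℕ) (γn : ℕ → ℂ) (η : ℕ → ℕ → ℝ) (hηtop : ∀ k, η (M+1) k = (γn k).im)
    (ξ : GZIdx (M+1) → ℝ) {m j : ℕ} (hm : m ≤ M + 1) (hj : j ∈ Icc 1 m) :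
    (gzTube (M+1) γn η ξ m j).im = η m j := by
  rw [Finset.mem_Icc] at hj
  unfold gzTube
  split_ifs with h
  · simp
  · have : m = M + 1 := by omega
    rw [this, hηtop]

lemma gz_cont (M : ℕ) (γn : ℕ → ℂ) (η : ℕ → ℕ → ℝ) (m j : ℕ) :
    Continuous (fun ξ : GZIdx (M+1) → ℝ => gzTube (M+1) γn η ξ m j) := by
  unfold gzTube
  split_ifs with h
  · fun_prop
  · fun_prop

lemma aux_z {ℏ : ℝ} (hℏ : 0 < ℏ) (a b : ℂ) {y y' : ℝ} (ha : a.im = y) (hb : b.im = y') :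
    (a - b) / (Complex.I * ℏ) = (((y - y') / ℏ : ℝ) : ℂ) + ((-(a.re - b.re) / ℏ : ℝ) : ℂ) * Complex.I := by
  have : (ℏ : ℂ) ≠ 0 := by exact_mod_cast hℏ.ne'
  rw [div_eq_iff (mul_ne_zero Complex.I_ne_zero this)]
  apply Complex.ext
  · simp [← ha, ← hb]; field_simp; ring
  · simp [← ha, ← hb]; field_simp

lemma aux_abs {ℏ : ℝ} (hℏ : 0 < ℏ) (a b : ℝ) : |(-(a - b) / ℏ)| = |a - b| / ℏ := by
  rw [abs_div, abs_neg, abs_of_pos hℏ]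

lemma toda_form (ℏ : ℝ) (M : ℕ) (x : ℕ → ℝ) (γ : GZ) : todaIntegrand ℏ (M+1) x γ =
  (∏ n ∈ Icc 1 M,
    (∏ k ∈ Icc 1 n, ∏ m ∈ Icc 1 (n + 1),
      hpow ℏ ((γ n k - γ (n + 1) m) / (Complex.I * ℏ)) *
        Complex.Gamma ((γ n k - γ (n + 1) m) / (Complex.I * ℏ))) *
      ∏ s ∈ Icc 1 n, ∏ p ∈ (Icc 1 n).erase s,
        (Complex.Gamma ((γ n s - γ n p) / (Complex.I * ℏ)))⁻¹) *
    Complex.exp ((Complex.I / (ℏ : ℂ)) * ∑ n ∈ Icc 1 (M+1),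
      ((∑ j ∈ Icc 1 n, γ n j) - ∑ j ∈ Icc 1 (n - 1), γ (n - 1) j) * (x n : ℂ)) := by
  unfold todaIntegrand
  simp only [Nat.add_sub_cancel, div_eq_mul_inv (∏ _ ∈ _, _), Finset.prod_inv_distrib]

lemma toda_cont (ℏ : ℝ) (hℏ : 0 < ℏ) (M : ℕ) (γn : ℕ → ℂ) (η : ℕ → ℕ → ℝ)
    (hηtop : ∀ k, η (M+1) k = (γn k).im)
    (hη : ∀ m : ℕ, 1 ≤ m → m ≤ M → ∀ j ∈ Icc 1 m, ∀ k ∈ Icc 1 (m + 1),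
      η (m + 1) k < η m j)
    (x : ℕ → ℝ) : Continuous (fun ξ : GZIdx (M+1) → ℝ => todaIntegrand ℏ (M+1) x (gzTube (M+1) γn η ξ)) := by
  have hc := gz_cont M γn η
  simp only [toda_form]
  refine Continuous.mul (continuous_finsetProd _ fun n hn => Continuous.mul ?_ ?_) ?_
  · refine continuous_finsetProd _ fun k hk => continuous_finsetProd _ fun m hm => Continuous.mul ?_ ?_
    · unfold hpow; fun_prop
    · rw [continuous_iff_continuousAt]
      intro ξ
      have hd : Continuous (fun ξ : GZIdx (M+1) → ℝ =>
        (gzTube (M+1) γn η ξ n k - gzTube (M+1) γn η ξ (n+1) m) / (Complex.I * ℏ)) := by fun_prop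
      refine ContinuousAt.comp (f := fun ξ : GZIdx (M+1) → ℝ =>
        (gzTube (M+1) γn η ξ n k - gzTube (M+1) γn η ξ (n+1) m) / (Complex.I * ℏ)) ?_ hd.continuousAt
      apply Complex.continuousAt_Gamma
      intro q hq
      rw [Finset.mem_Icc] at hn
      rw [aux_z hℏ _ _ (gz_im M γn η hηtop ξ (by omega) hk) (gz_im M γn η hηtop ξ (by omega) hm)] at hq
      have h1 := congrArg Complex.re hq
      simp at h1
      have h2 := hη n hn.1 hn.2 k hk m hm
      have h3 : 0 < (η n k - η (n+1) m) / ℏ := div_pos (by linarith) hℏ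
      have h4 : (0:ℝ) ≤ q := Nat.cast_nonneg q
      linarith
  · refine continuous_finsetProd _ fun k hk => continuous_finsetProd _ fun m hm => ?_
    have := Complex.differentiable_one_div_Gamma.continuous
    exact this.comp (by fun_prop)
  · fun_prop

lemma toda_bd (ℏ : ℝ) (hℏ : 0 < ℏ) (M : ℕ) (γn : ℕ → ℂ) (η : ℕ → ℕ → ℝ)
    (hηtop : ∀ k, η (M+1) k = (γn k).im)
    (hη : ∀ m : ℕ, 1 ≤ m → m ≤ M → ∀ j ∈ Icc 1 m, ∀ k ∈ Icc 1 (m + 1),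
      η (m + 1) k < η m j)
    (x : ℕ → ℝ) {δ : ℝ} (hδ : 0 < δ) :
    Bd (fun ξ : GZIdx (M+1) → ℝ => todaIntegrand ℏ (M+1) x (gzTube (M+1) γn η ξ))
      (fun ξ => (-(Real.pi / 2 - δ) * ∑ m ∈ Icc 1 M, rowE (fun m j => (gzTube (M+1) γn η ξ m j).re) m
        + (Real.pi / 2 + δ) * ∑ m ∈ Icc 1 M, rowS (fun m j => (gzTube (M+1) γn η ξ m j).re) m) / ℏ) := by
  simp only [toda_form]
  have hexp : Bd (fun ξ : GZIdx (M+1) → ℝ => Complex.exp ((Complex.I / (ℏ : ℂ)) * ∑ n ∈ Icc 1 (M+1),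
      ((∑ j ∈ Icc 1 n, gzTube (M+1) γn η ξ n j) - ∑ j ∈ Icc 1 (n - 1), gzTube (M+1) γn η ξ (n - 1) j) * (x n : ℂ)))
      (fun _ => 0) := by
    refine ⟨Real.exp (-(∑ n ∈ Icc 1 (M+1),
      ((∑ j ∈ Icc 1 n, η n j) - ∑ j ∈ Icc 1 (n - 1), η (n - 1) j) * x n) / ℏ), by positivity, fun ξ => ?_⟩
    rw [Complex.norm_exp, Real.exp_zero, mul_one]
    apply le_of_eq
    congr 1
    have : ∀ w : ℂ, (Complex.I / (ℏ : ℂ) * w).re = - w.im / ℏ := by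
      intro w
      rw [div_mul_eq_mul_div, Complex.div_ofReal_re]; simp
    rw [this, Complex.im_sum]
    congr 2
    refine Finset.sum_congr rfl fun n hn => ?_
    rw [Finset.mem_Icc] at hn
    rw [Complex.im_mul_ofReal, Complex.sub_im, Complex.im_sum, Complex.im_sum]
    congr 2
    · exact Finset.sum_congr rfl fun j hj => gz_im M γn η hηtop ξ (by omega) hj
    · exact Finset.sum_congr rfl fun j hj => gz_im M γn η hηtop ξ (by omega) hj
  have hE : ∀ n ∈ Icc 1 M, ∀ k ∈ Icc 1 n, ∀ m ∈ Icc 1 (n+1), Bd (fun ξ : GZIdx (M+1) → ℝ =>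
      hpow ℏ ((gzTube (M+1) γn η ξ n k - gzTube (M+1) γn η ξ (n + 1) m) / (Complex.I * ℏ)) *
        Complex.Gamma ((gzTube (M+1) γn η ξ n k - gzTube (M+1) γn η ξ (n + 1) m) / (Complex.I * ℏ)))
      (fun ξ => -(Real.pi / 2 - δ) * (|(gzTube (M+1) γn η ξ n k).re - (gzTube (M+1) γn η ξ (n + 1) m).re| / ℏ)) := by
    intro n hn k hk m hm
    rw [Finset.mem_Icc] at hn
    have h2 := hη n hn.1 hn.2 k hk m hm
    have h3 : 0 < (η n k - η (n+1) m) / ℏ := div_pos (by linarith) hℏ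
    obtain ⟨C, hC, h⟩ := aux_gamma_bound h3 hδ
    refine ⟨Real.exp ((η n k - η (n+1) m) / ℏ * Real.log ℏ) * C, by positivity, fun ξ => ?_⟩
    beta_reduce
    rw [aux_z hℏ _ _ (gz_im M γn η hηtop ξ (by omega) hk) (gz_im M γn η hηtop ξ (by omega) hm),
      norm_mul, mul_assoc]
    have := h (-((gzTube (M+1) γn η ξ n k).re - (gzTube (M+1) γn η ξ (n + 1) m).re) / ℏ)
    rw [aux_abs hℏ] at this
    refine mul_le_mul (le_of_eq ?_) this (norm_nonneg _) (by positivity)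
    rw [hpow, Complex.norm_exp, Complex.re_mul_ofReal]
    simp
  have hS : ∀ n ∈ Icc 1 M, ∀ k ∈ Icc 1 n, ∀ m ∈ (Icc 1 n).erase k, Bd (fun ξ : GZIdx (M+1) → ℝ =>
      (Complex.Gamma ((gzTube (M+1) γn η ξ n k - gzTube (M+1) γn η ξ n m) / (Complex.I * ℏ)))⁻¹ *
      (Complex.Gamma ((gzTube (M+1) γn η ξ n m - gzTube (M+1) γn η ξ n k) / (Complex.I * ℏ)))⁻¹)
      (fun ξ => (Real.pi + 2 * δ) * (|(gzTube (M+1) γn η ξ n k).re - (gzTube (M+1) γn η ξ n m).re| / ℏ)) := by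
    intro n hn k hk m hm
    rw [Finset.mem_Icc] at hn
    obtain ⟨C, hC, h⟩ := aux_inv_gamma_pair ((η n k - η n m) / ℏ) (show 0 < 2 * δ by positivity)
    refine ⟨C, hC, fun ξ => ?_⟩
    have e : (gzTube (M+1) γn η ξ n m - gzTube (M+1) γn η ξ n k) / (Complex.I * ℏ) =
      - ((gzTube (M+1) γn η ξ n k - gzTube (M+1) γn η ξ n m) / (Complex.I * ℏ)) := by ring
    beta_reduce
    rw [e, aux_z hℏ _ _ (gz_im M γn η hηtop ξ (by omega) hk) (gz_im M γn η hηtop ξ (by omega) (Finset.mem_of_mem_erase hm))]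
    have := h (-((gzTube (M+1) γn η ξ n k).re - (gzTube (M+1) γn η ξ n m).re) / ℏ)
    rwa [aux_abs hℏ] at this
  have hS' : ∀ n ∈ Icc 1 M, Bd (fun ξ : GZIdx (M+1) → ℝ => ∏ s ∈ Icc 1 n, ∏ p ∈ (Icc 1 n).erase s,
        (Complex.Gamma ((gzTube (M+1) γn η ξ n s - gzTube (M+1) γn η ξ n p) / (Complex.I * ℏ)))⁻¹)
      (fun ξ => (Real.pi / 2 + δ) * (rowS (fun m j => (gzTube (M+1) γn η ξ m j).re) n / ℏ)) := by
    intro n hn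
    have h1 := Bd.prod _ fun k hk => Bd.prod _ (hS n hn k hk)
    refine Bd.sqrt (h1.mono (fun ξ => ?_) (fun ξ => le_rfl)) (fun ξ => ?_)
    · congr 1
      simp only [Finset.prod_mul_distrib]
      congr 1
      refine Finset.prod_comm' ?_
      intro a b
      simp only [Finset.mem_erase]; tauto
    · simp only [← Finset.mul_sum, ← Finset.sum_div]
      have : ∑ k ∈ Icc 1 n, ∑ m ∈ (Icc 1 n).erase k,
          |(gzTube (M+1) γn η ξ n k).re - (gzTube (M+1) γn η ξ n m).re| =
          rowS (fun m j => (gzTube (M+1) γn η ξ m j).re) n := by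
        unfold rowS
        refine Finset.sum_congr rfl fun k hk => ?_
        rw [← Finset.add_sum_erase (Icc 1 n) _ hk]; simp
      rw [this]; ring
  have h1 := (Bd.prod (Icc 1 M) fun n hn => (Bd.prod _ fun k hk => Bd.prod _ (hE n hn k hk)).mul (hS' n hn)).mul hexp
  refine h1.mono (fun ξ => rfl) (fun ξ => le_of_eq ?_)
  simp only [← Finset.mul_sum, ← Finset.sum_div, Finset.sum_add_distrib, rowE]
  ring

lemma toda_integrable (ℏ : ℝ) (hℏ : 0 < ℏ) (M : ℕ) (γn : ℕ → ℂ) (η : ℕ → ℕ → ℝ)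
    (hηtop : ∀ k, η (M+1) k = (γn k).im)
    (hη : ∀ m : ℕ, 1 ≤ m → m ≤ M → ∀ j ∈ Icc 1 m, ∀ k ∈ Icc 1 (m + 1),
      η (m + 1) k < η m j)
    (x : ℕ → ℝ) : Integrable (fun ξ : GZIdx (M+1) → ℝ => todaIntegrand ℏ (M+1) x (gzTube (M+1) γn η ξ)) := by
  set K : ℝ := ∑ m ∈ Icc 1 M, ((m:ℝ) * (m+1) * 2 + (m:ℝ) * m * 2) with hK
  have hK0 : 0 ≤ K := Finset.sum_nonneg fun m _ => by positivity
  set R : ℝ := ∑ k ∈ Icc 1 (M+1), |(γn k).re| with hR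
  have hR0 : 0 ≤ R := Finset.sum_nonneg fun m _ => by positivity
  obtain ⟨D, hD⟩ : ∃ D : ℝ, D = ((Fintype.card (GZIdx (M+1)) : ℕ) : ℝ) := ⟨_, rfl⟩
  have hD0 : 0 ≤ D := hD ▸ Nat.cast_nonneg _
  obtain ⟨C, hC, h⟩ := toda_bd ℏ hℏ M γn η hηtop hη x (show 0 < 1 / (K+1) by positivity)
  have hI : Integrable (fun ξ : GZIdx (M+1) → ℝ => C * Real.exp (3 * R / ℏ) *
      Real.exp (-(2 / ((D+1) * ℏ)) * ∑ i, |ξ i|)) :=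
    (aux_int_exp_sum (by positivity)).const_mul _
  refine hI.mono' (toda_cont ℏ hℏ M γn η hηtop hη x).aestronglyMeasurable (Filter.Eventually.of_forall fun ξ => ?_)
  refine (h ξ).trans ?_
  rw [mul_assoc, ← Real.exp_add]
  refine mul_le_mul_of_nonneg_left (Real.exp_le_exp.mpr ?_) hC
  set X : ℕ → ℕ → ℝ := fun m j => (gzTube (M+1) γn η ξ m j).re with hX
  have htop : ∀ k ∈ Icc 1 (M+1), |X (M+1) k| ≤ R := by
    intro k hk
    have : X (M+1) k = (γn k).re := by
      simp only [hX, gzTube]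
      rw [dif_neg (by omega)]
    rw [this]
    exact Finset.single_le_sum (f := fun k => |(γn k).re|) (fun i _ => abs_nonneg _) hk
  obtain ⟨G, hG, hGX, hG2⟩ := aux_coercive M X R htop
  have hsub : ∀ a b : ℝ, |a| ≤ R + G → |b| ≤ R + G → |a - b| ≤ 2 * (R + G) := by
    intro a b ha hb
    have := abs_sub a b
    linarith
  have hsum : ∑ m ∈ Icc 1 M, rowE X m + ∑ m ∈ Icc 1 M, rowS X m ≤ K * (R + G) := by
    rw [← Finset.sum_add_distrib, hK, Finset.sum_mul]
    refine Finset.sum_le_sum fun m hm => ?_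
    rw [Finset.mem_Icc] at hm
    have hE : rowE X m ≤ ∑ k ∈ Icc 1 m, ∑ l ∈ Icc 1 (m+1), 2 * (R+G) :=
      Finset.sum_le_sum fun k hk => Finset.sum_le_sum fun l hl =>
        hsub _ _ (hGX m (by omega) k hk) (hGX (m+1) (by omega) l hl)
    have hS : rowS X m ≤ ∑ k ∈ Icc 1 m, ∑ l ∈ Icc 1 m, 2 * (R+G) :=
      Finset.sum_le_sum fun k hk => Finset.sum_le_sum fun l hl =>
        hsub _ _ (hGX m (by omega) k hk) (hGX m (by omega) l hl)
    simp at hE hS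
    linarith
  have hxi : ∑ i, |ξ i| ≤ (D + 1) * (R + G) := by
    have : ∑ i, |ξ i| ≤ ∑ i : GZIdx (M+1), (R + G) := by
      refine Finset.sum_le_sum fun i _ => ?_
      obtain ⟨⟨m, j⟩, h1, h2⟩ := i
      have h3 := hGX m (by omega) j (by rw [Finset.mem_Icc]; exact ⟨h1, h2⟩)
      have h4 : X m j = ξ ⟨(m, j), h1, h2⟩ := by
        simp only [hX, gzTube]
        rw [dif_pos ⟨h1, h2, m.2⟩]
        simp
      rwa [h4] at h3
    rw [Finset.sum_const, nsmul_eq_mul, Finset.card_univ, ← hD] at this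
    linarith
  have hfin : -(Real.pi / 2 - 1 / (K+1)) * ∑ m ∈ Icc 1 M, rowE X m
        + (Real.pi / 2 + 1 / (K+1)) * ∑ m ∈ Icc 1 M, rowS X m ≤ 3 * R - 2 / (D + 1) * ∑ i, |ξ i| := by
    have f1 : 1 / (K+1) * (∑ m ∈ Icc 1 M, rowE X m + ∑ m ∈ Icc 1 M, rowS X m) ≤ R + G := by
      rw [div_mul_eq_mul_div, div_le_iff₀ (by positivity)]
      nlinarith
    have f2 : 2 / (D + 1) * ∑ i, |ξ i| ≤ 2 * (R + G) := by
      rw [div_mul_eq_mul_div, div_le_iff₀ (by positivity)]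
      nlinarith
    have f3 := Real.pi_gt_three
    have f4 : Real.pi / 2 * (2 * G) ≤ Real.pi / 2 * (∑ m ∈ Icc 1 M, rowE X m - ∑ m ∈ Icc 1 M, rowS X m) :=
      mul_le_mul_of_nonneg_left hG2 (by positivity)
    nlinarith
  calc _ ≤ (3 * R - 2 / (D + 1) * ∑ i, |ξ i|) / ℏ := div_le_div_of_nonneg_right hfin hℏ.le
    _ = _ := by field_simp; ring

lemma aux_split (M : ℕ) : ∃ T : ((Fin M → ℝ) × (GZIdx M → ℝ)) ≃ᵐ (GZIdx (M+1) → ℝ),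
    MeasurePreserving T volume volume ∧
    (∀ p (i : ℕ) (h1 : i < M) (hh), T p ⟨(⟨M, Nat.lt_succ_self M⟩, ⟨i + 1, Nat.succ_lt_succ h1⟩), hh⟩ = p.1 ⟨i, h1⟩) ∧
    (∀ p (m j : ℕ) (hm : m < M) (hj : j < M) (hh) (hh'),
      T p ⟨(⟨m, hm.trans (Nat.lt_succ_self M)⟩, ⟨j, hj.trans (Nat.lt_succ_self M)⟩), hh⟩ =
        p.2 ⟨(⟨m, hm⟩, ⟨j, hj⟩), hh'⟩) := by
  let f : Fin M ⊕ GZIdx M → GZIdx (M+1) := Sum.elim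
    (fun i => ⟨(⟨M, Nat.lt_succ_self M⟩, ⟨i + 1, Nat.succ_lt_succ i.2⟩), by
      have := i.2; simp only; omega⟩)
    (fun q => ⟨(⟨q.1.1, q.1.1.2.trans (Nat.lt_succ_self M)⟩, ⟨q.1.2, q.1.2.2.trans (Nat.lt_succ_self M)⟩), q.2⟩)
  have hf : Function.Bijective f := by
    constructor
    · rintro (⟨i, hi⟩ | ⟨⟨⟨m, hm⟩, ⟨j, hj⟩⟩, h⟩) (⟨i', hi'⟩ | ⟨⟨⟨m', hm'⟩, ⟨j', hj'⟩⟩, h'⟩) heq <;>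
      simp [f, Subtype.ext_iff, Prod.ext_iff, Fin.ext_iff] at heq ⊢ <;> omega
    · rintro ⟨⟨⟨m, hm⟩, ⟨j, hj⟩⟩, h⟩
      simp only at h
      by_cases hmM : m = M
      · subst hmM
        refine ⟨Sum.inl ⟨j - 1, by omega⟩, ?_⟩
        simp [f]; omega
      · exact ⟨Sum.inr ⟨(⟨m, by omega⟩, ⟨j, by omega⟩), h⟩, by simp [f]⟩
  let e := Equiv.ofBijective f hf
  refine ⟨(MeasurableEquiv.sumPiEquivProdPi (fun _ : Fin M ⊕ GZIdx M => ℝ)).symm.trans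
    (MeasurableEquiv.piCongrLeft (fun _ => ℝ) e),
    (volume_measurePreserving_piCongrLeft (fun _ => ℝ) e).comp
      (volume_measurePreserving_sumPiEquivProdPi_symm (fun _ : Fin M ⊕ GZIdx M => ℝ)), ?_, ?_⟩
  · intro p i h1 hh
    exact Equiv.piCongrLeft_apply_apply (fun _ => ℝ) e
      ((Equiv.sumPiEquivProdPi (fun _ : Fin M ⊕ GZIdx M => ℝ)).symm p) (Sum.inl ⟨i, h1⟩)
  · intro p m j hm hj hh hh'
    exact Equiv.piCongrLeft_apply_apply (fun _ => ℝ) e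
      ((Equiv.sumPiEquivProdPi (fun _ : Fin M ⊕ GZIdx M => ℝ)).symm p) (Sum.inr ⟨(⟨m, hm⟩, ⟨j, hj⟩), hh'⟩)

lemma toda_factor (ℏ : ℝ) (L : ℕ) (x : ℕ → ℝ) (γ γ' : GZ) (β γn : ℕ → ℂ)
    (h1 : ∀ m ≤ L + 1, ∀ j ∈ Icc 1 m, γ m j = γ' m j)
    (h2 : ∀ j ∈ Icc 1 (L+1), γ (L+1) j = β j)
    (h3 : ∀ j ∈ Icc 1 (L+2), γ (L+2) j = γn j) :
    todaIntegrand ℏ (L+2) x γ =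
      (∏ s ∈ Icc 1 (L+1), ∏ t ∈ (Icc 1 (L+1)).erase s,
          (Complex.Gamma ((β s - β t) / (Complex.I * ℏ)))⁻¹) *
        (∏ k ∈ Icc 1 (L+1), ∏ m ∈ Icc 1 (L+2),
          hpow ℏ ((β k - γn m) / (Complex.I * ℏ)) * Complex.Gamma ((β k - γn m) / (Complex.I * ℏ))) *
        Complex.exp ((Complex.I / (ℏ : ℂ)) *
          ((∑ j ∈ Icc 1 (L+2), γn j) - ∑ k ∈ Icc 1 (L+1), β k) * (x (L+2) : ℂ)) *
        todaIntegrand ℏ (L+1) x γ' := by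
  rw [toda_form, toda_form, Finset.prod_Icc_succ_top (by omega), Finset.sum_Icc_succ_top (by omega : 1 ≤ L + 1 + 1),
    mul_add, Complex.exp_add]
  have e1 : (∏ k ∈ Icc 1 (L+1), ∏ m ∈ Icc 1 (L + 1 + 1),
      hpow ℏ ((γ (L+1) k - γ (L + 1 + 1) m) / (Complex.I * ℏ)) *
        Complex.Gamma ((γ (L+1) k - γ (L + 1 + 1) m) / (Complex.I * ℏ))) =
      (∏ k ∈ Icc 1 (L+1), ∏ m ∈ Icc 1 (L+2),
          hpow ℏ ((β k - γn m) / (Complex.I * ℏ)) * Complex.Gamma ((β k - γn m) / (Complex.I * ℏ))) :=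
    Finset.prod_congr rfl fun k hk => Finset.prod_congr rfl fun m hm => by rw [h2 k hk, h3 m hm]
  have e2 : (∏ s ∈ Icc 1 (L+1), ∏ p ∈ (Icc 1 (L+1)).erase s,
        (Complex.Gamma ((γ (L+1) s - γ (L+1) p) / (Complex.I * ℏ)))⁻¹) =
      ∏ s ∈ Icc 1 (L+1), ∏ t ∈ (Icc 1 (L+1)).erase s,
          (Complex.Gamma ((β s - β t) / (Complex.I * ℏ)))⁻¹ :=
    Finset.prod_congr rfl fun k hk => Finset.prod_congr rfl fun m hm => by
      rw [h2 k hk, h2 m (Finset.mem_of_mem_erase hm)]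
  have e3 : ((∑ j ∈ Icc 1 (L+1+1), γ (L+1+1) j) - ∑ j ∈ Icc 1 (L+1+1 - 1), γ (L+1+1 - 1) j) =
      (∑ j ∈ Icc 1 (L+2), γn j) - ∑ k ∈ Icc 1 (L+1), β k :=
    congrArg₂ _ (Finset.sum_congr rfl h3) (Finset.sum_congr rfl h2)
  have e4 : (∏ n ∈ Icc 1 L,
    (∏ k ∈ Icc 1 n, ∏ m ∈ Icc 1 (n + 1),
      hpow ℏ ((γ n k - γ (n + 1) m) / (Complex.I * ℏ)) *
        Complex.Gamma ((γ n k - γ (n + 1) m) / (Complex.I * ℏ))) *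
      ∏ s ∈ Icc 1 n, ∏ p ∈ (Icc 1 n).erase s,
        (Complex.Gamma ((γ n s - γ n p) / (Complex.I * ℏ)))⁻¹) = (∏ n ∈ Icc 1 L,
    (∏ k ∈ Icc 1 n, ∏ m ∈ Icc 1 (n + 1),
      hpow ℏ ((γ' n k - γ' (n + 1) m) / (Complex.I * ℏ)) *
        Complex.Gamma ((γ' n k - γ' (n + 1) m) / (Complex.I * ℏ))) *
      ∏ s ∈ Icc 1 n, ∏ p ∈ (Icc 1 n).erase s,
        (Complex.Gamma ((γ' n s - γ' n p) / (Complex.I * ℏ)))⁻¹) := by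
    refine Finset.prod_congr rfl fun n hn => ?_
    rw [Finset.mem_Icc] at hn
    refine congrArg₂ _ ?_ ?_
    · exact Finset.prod_congr rfl fun k hk => Finset.prod_congr rfl fun m hm => by
        rw [h1 n (by omega) k hk, h1 (n+1) (by omega) m hm]
    · exact Finset.prod_congr rfl fun k hk => Finset.prod_congr rfl fun m hm => by
        rw [h1 n (by omega) k hk, h1 n (by omega) m (Finset.mem_of_mem_erase hm)]
  have e5 : ∑ n ∈ Icc 1 (L+1),
      ((∑ j ∈ Icc 1 n, γ n j) - ∑ j ∈ Icc 1 (n - 1), γ (n - 1) j) * (x n : ℂ) = ∑ n ∈ Icc 1 (L+1),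
      ((∑ j ∈ Icc 1 n, γ' n j) - ∑ j ∈ Icc 1 (n - 1), γ' (n - 1) j) * (x n : ℂ) := by
    refine Finset.sum_congr rfl fun n hn => ?_
    rw [Finset.mem_Icc] at hn
    rw [Finset.sum_congr rfl (h1 n (by omega)), Finset.sum_congr rfl (h1 (n-1) (by omega))]
  rw [e1, e2, e3, e4, e5, mul_assoc (Complex.I / (ℏ:ℂ))]
  ring

/-- the Gelfand–Zetlin recursion for the Mellin–Barnes wave
functions: `ψ_{γ_n}(x_1,…,x_n)` is obtained from `ψ_{γ_{n−1}}(x_1,…,x_{n−1})` by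
integrating against `μ^{(n−1)}(γ_{n−1})·f_n(γ_n,γ_{n−1})·e^{(i/ℏ)(Σγ_n − Σγ_{n−1})x_n}`
over the contour `Im γ_{n−1,k} = η_{n−1,k}`. -/
theorem toda_wave_function_recursion (ℏ : ℝ) (hℏ : 0 < ℏ) (n : ℕ) (hn : 2 ≤ n)
    (γn : ℕ → ℂ) (η : ℕ → ℕ → ℝ)
    (hηtop : ∀ k, η n k = (γn k).im)
    (hη : ∀ m : ℕ, 1 ≤ m → m ≤ n - 1 → ∀ j ∈ Icc 1 m, ∀ k ∈ Icc 1 (m + 1),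
      η (m + 1) k < η m j)
    (x : ℕ → ℝ) :
    psiMB ℏ η n γn x =
      ∫ ζ : Fin (n - 1) → ℝ,
        (∏ s ∈ Icc 1 (n - 1), ∏ t ∈ (Icc 1 (n - 1)).erase s,
          (Complex.Gamma
            ((((if h : s - 1 < n - 1 then (ζ ⟨s - 1, h⟩ : ℂ) else 0) + Complex.I * (η (n - 1) s : ℂ)) -
              ((if h : t - 1 < n - 1 then (ζ ⟨t - 1, h⟩ : ℂ) else 0) + Complex.I * (η (n - 1) t : ℂ))) /
              (Complex.I * ℏ)))⁻¹) *
        (∏ k ∈ Icc 1 (n - 1), ∏ m ∈ Icc 1 n,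
          hpow ℏ ((((if h : k - 1 < n - 1 then (ζ ⟨k - 1, h⟩ : ℂ) else 0) +
              Complex.I * (η (n - 1) k : ℂ)) - γn m) / (Complex.I * ℏ)) *
            Complex.Gamma ((((if h : k - 1 < n - 1 then (ζ ⟨k - 1, h⟩ : ℂ) else 0) +
              Complex.I * (η (n - 1) k : ℂ)) - γn m) / (Complex.I * ℏ))) *
        Complex.exp ((Complex.I / (ℏ : ℂ)) *
          ((∑ j ∈ Icc 1 n, γn j) - ∑ k ∈ Icc 1 (n - 1),
            ((if h : k - 1 < n - 1 then (ζ ⟨k - 1, h⟩ : ℂ) else 0) +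
              Complex.I * (η (n - 1) k : ℂ))) * (x n : ℂ)) *
        psiMB ℏ η (n - 1)
          (fun k => (if h : k - 1 < n - 1 then (ζ ⟨k - 1, h⟩ : ℂ) else 0) +
            Complex.I * (η (n - 1) k : ℂ)) x := by
  obtain ⟨L, rfl⟩ : ∃ L, n = L + 2 := ⟨n - 2, by omega⟩
  have hI := toda_integrable ℏ hℏ (L+1) γn η hηtop hη x
  obtain ⟨T, hT, hT1, hT2⟩ := aux_split (L+1)
  simp only [show L + 2 - 1 = L + 1 from rfl]
  rw [psiMB, ← hT.integral_comp' (g := fun ξ => todaIntegrand ℏ (L+2) x (gzTube (L+2) γn η ξ))]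
  have hI' := (hT.integrable_comp_emb T.measurableEmbedding).mpr hI
  rw [Measure.volume_eq_prod] at hI' ⊢
  refine (integral_prod _ hI').trans ?_
  refine integral_congr_ae (Filter.Eventually.of_forall fun ζ => ?_)
  beta_reduce
  rw [psiMB, ← integral_const_mul]
  refine integral_congr_ae (Filter.Eventually.of_forall fun ξ => ?_)
  beta_reduce
  refine toda_factor ℏ L x _ _ (fun k => (if h : k - 1 < L + 1 then (ζ ⟨k - 1, h⟩ : ℂ) else 0) +
            Complex.I * (η (L+1) k : ℂ)) γn ?_ ?_ ?_
  · intro m hm j hj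
    rw [Finset.mem_Icc] at hj
    rcases Nat.lt_or_ge m (L+1) with h | h
    · unfold gzTube
      rw [dif_pos ⟨hj.1, hj.2, by omega⟩, dif_pos ⟨hj.1, hj.2, h⟩]
      rw [hT2 (ζ, ξ) m j h (by omega) hj hj]
    · obtain rfl : m = L + 1 := by omega
      obtain ⟨i, rfl⟩ : ∃ i, j = i + 1 := ⟨j - 1, by omega⟩
      unfold gzTube
      rw [dif_pos ⟨hj.1, hj.2, by omega⟩, dif_neg (by omega)]
      rw [hT1 (ζ, ξ) i (by omega) hj]
      beta_reduce
      rw [dif_pos (by omega)]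
      rfl
  · intro j hj
    rw [Finset.mem_Icc] at hj
    obtain ⟨i, rfl⟩ : ∃ i, j = i + 1 := ⟨j - 1, by omega⟩
    unfold gzTube
    rw [dif_pos ⟨hj.1, hj.2, by omega⟩]
    rw [hT1 (ζ, ξ) i (by omega) hj, dif_pos (by omega)]
    rfl
  · intro j hj
    unfold gzTube
    rw [dif_neg (by omega)]
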